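/- For every 0 ≤ l < S, the level-l nested average log-likelihood satisfies the drift identity Σ_{z∈Z} P_Z(z) · U^{(l)}(π'(z)) = U^{(l)}(π) + EJS^{(l)}(π), where π'(z) is the Bayes update of π after observing z. -/

import Mathlib

/-!
The identity holds bin by bin. For a bin `B` of mass `m`, put `a z = ∑_{i ∈ B} πᵢ P_{Z|i}(z)` and
`b z = ∑_{i ∉ B} πᵢ P_{Z|i}(z)`, so that `P_Z = a + b` and the posterior mass of `B` after observing
`z` is `a z / (a z + b z)`. The factor `P_Z(z)` cancels, so the expected posterior term is
`∑_z a z log (a z / b z)`. Writing the odds ratio `a / b` as the prior odds `m / (1 - m)` times the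
likelihood ratio `(a / m) / (b / (1 - m))` and using `∑_z a z = m` splits this sum into the prior
term and the divergence term; this is `bin_drift`. Summing over the bins gives the theorem.
-/

noncomputable section

/-- KL divergence between two pmfs on a finite alphabet (natural logarithm). -/
def KLf {Z : Type*} [Fintype Z] (P Q : Z → ℝ) : ℝ := ∑ z, P z * Real.log (P z / Q z)

/-- `bin(q)` at level `l` of the depth-`S` binary tree: the leaves
`{q·2^{S−l}, …, (q+1)·2^{S−l} − 1}` (0-indexed). -/
def bin (S l q : ℕ) : Finset (Fin (2^S)) :=
  Finset.univ.filter fun i => q * 2^(S - l) ≤ (i : ℕ) ∧ (i : ℕ) < (q+1) * 2^(S - l)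

/-- Level-`l` nested posterior mass `π^{(l)}_q = Σ_{i∈bin(q)} πᵢ`. -/
def binMass (S : ℕ) (π : Fin (2^S) → ℝ) (l q : ℕ) : ℝ := ∑ i ∈ bin S l q, π i

/-- Level-`l` nested average log-likelihood
`U^{(l)}(π) = Σ_q π^{(l)}_q log(π^{(l)}_q/(1−π^{(l)}_q))`. -/
def nestedU (S l : ℕ) (π : Fin (2^S) → ℝ) : ℝ :=
  ∑ q ∈ Finset.range (2^l), binMass S π l q * Real.log (binMass S π l q / (1 - binMass S π l q))

/-- Level-`l` nested Extrinsic Jensen–Shannon divergence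
`EJS^{(l)}(π) = Σ_q π^{(l)}_q D(P_{Z|bin(q)} ‖ P_{Z|∉bin(q)})`. -/
def nestedEJS (S l : ℕ) {Z : Type*} [Fintype Z] (π : Fin (2^S) → ℝ)
    (P : Fin (2^S) → Z → ℝ) : ℝ :=
  ∑ q ∈ Finset.range (2^l),
    binMass S π l q *
      KLf (fun z => (∑ i ∈ bin S l q, π i * P i z) / binMass S π l q)
          (fun z => (∑ i ∈ (bin S l q)ᶜ, π i * P i z) / (1 - binMass S π l q))

/-- The contribution of a single bin of prior mass `m`, where `a` and `b` are the unnormalized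
likelihoods of the bin and of its complement. -/
theorem bin_drift {Z : Type*} [Fintype Z] (a b : Z → ℝ) (m : ℝ) (hm0 : 0 < m) (hm1 : m < 1)
    (ha : ∀ z, 0 < a z) (hb : ∀ z, 0 < b z) (hsum : ∑ z, a z = m) :
    ∑ z, (a z + b z) *
        (a z / (a z + b z) * Real.log (a z / (a z + b z) / (1 - a z / (a z + b z))))
      = m * Real.log (m / (1 - m)) + m * KLf (fun z => a z / m) (fun z => b z / (1 - m)) := by
  have h1m : 0 < 1 - m := sub_pos.2 hm1
  have hprior : m * Real.log (m / (1 - m)) = ∑ z, a z * Real.log (m / (1 - m)) := by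
    rw [← Finset.sum_mul, hsum]
  rw [hprior, KLf, Finset.mul_sum, ← Finset.sum_add_distrib]
  refine Finset.sum_congr rfl fun z _ => ?_
  have hab : 0 < a z + b z := add_pos (ha z) (hb z)
  have hodds : a z / (a z + b z) / (1 - a z / (a z + b z))
      = m / (1 - m) * (a z / m / (b z / (1 - m))) := by
    have hcompl : 1 - a z / (a z + b z) = b z / (a z + b z) := by
      field_simp
      ring
    have := (hb z).ne'
    rw [hcompl]
    field_simp
  have hlr : 0 < a z / m / (b z / (1 - m)) :=
    div_pos (div_pos (ha z) hm0) (div_pos (hb z) h1m)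
  rw [hodds, Real.log_mul (div_pos hm0 h1m).ne' hlr.ne']
  field_simp

/-- Drift identity for the nested average log-likelihood: for every `0 ≤ l < S`,
`Σ_z P_Z(z) U^{(l)}(π'(z)) = U^{(l)}(π) + EJS^{(l)}(π)`, where
`P_Z(z) = Σᵢ πᵢ P_{Z|i}(z)` and `π'ᵢ(z) = πᵢ P_{Z|i}(z)/P_Z(z)` is the Bayes update. -/
theorem nestedU_drift_eq_nestedEJS (S l : ℕ) (hl : l < S) (Z : Type*) [Fintype Z]
    (π : Fin (2^S) → ℝ) (hpos : ∀ i, 0 < π i) (hlt1 : ∀ i, π i < 1)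
    (hsum : ∑ i, π i = 1)
    (hbin : ∀ q < 2^l, 0 < binMass S π l q ∧ binMass S π l q < 1)
    (P : Fin (2^S) → Z → ℝ) (hP : ∀ i z, 0 < P i z) (hPsum : ∀ i, ∑ z, P i z = 1) :
    ∑ z, (∑ i, π i * P i z) *
        nestedU S l (fun i => π i * P i z / ∑ j, π j * P j z)
      = nestedU S l π + nestedEJS S l π P := by
  simp only [nestedU, nestedEJS]
  rw [← Finset.sum_add_distrib]
  simp_rw [Finset.mul_sum]
  rw [Finset.sum_comm]
  refine Finset.sum_congr rfl fun q hq => ?_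
  obtain ⟨hm0, hm1⟩ := hbin q (Finset.mem_range.1 hq)
  -- A bin of mass strictly between 0 and 1 is neither empty nor everything.
  have hne : (bin S l q).Nonempty := by
    rw [Finset.nonempty_iff_ne_empty]
    intro h
    simp [binMass, h] at hm0
  have hcne : (bin S l q)ᶜ.Nonempty := by
    rw [Finset.nonempty_iff_ne_empty]
    intro h
    rw [Finset.compl_eq_empty_iff] at h
    simp [binMass, h, hsum] at hm1
  have hmass : ∑ z, ∑ i ∈ bin S l q, π i * P i z = binMass S π l q := by
    rw [Finset.sum_comm]
    simp [← Finset.mul_sum, hPsum, binMass]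
  rw [← bin_drift (fun z => ∑ i ∈ bin S l q, π i * P i z)
    (fun z => ∑ i ∈ (bin S l q)ᶜ, π i * P i z) _ hm0 hm1
    (fun z => Finset.sum_pos (fun i _ => mul_pos (hpos i) (hP i z)) hne)
    (fun z => Finset.sum_pos (fun i _ => mul_pos (hpos i) (hP i z)) hcne) hmass]
  refine Finset.sum_congr rfl fun z _ => ?_
  have hpost : binMass S (fun i => π i * P i z / ∑ j, π j * P j z) l q
      = (∑ i ∈ bin S l q, π i * P i z) / ∑ j, π j * P j z := by
    rw [binMass, Finset.sum_div]
  simp only [hpost, Finset.sum_add_sum_compl]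

end
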